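/- Let X be an involutive BE algebra. Then X satisfies the axiom (QW): x→((x∧y)∧(z∧x)) = (x→y)∧(x→z) for all x, y, z, if and only if X satisfies both (QW1): x→(x∧y) = x→y for all x, y, and (QW2): x→(y∧(z∧x)) = (x→y)∧(x→z) for all x, y, z. -/

import Mathlib

/-!
Taking `y = x` in (QW) and using `x ∧ (z ∧ x) = z ∧ x` gives `x → (z ∧ x) = x → z`
(`imp_inf_right`); taking `z = 1` gives `x → ((x ∧ y) ∧ x) = x → y`. The former, applied to
`z = x ∧ y`, turns the latter into (QW1). For (QW2), contraposition and exchange show that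
(QW1) forces `(x ∧ y) ∧ (z ∧ x) = y ∧ (z ∧ x)` (`inf_inf_inf`), so (QW) becomes (QW2).
Conversely, (QW) is (QW2) with `x ∧ y` in place of `y`, simplified by (QW1).
-/

/-- A bounded involutive BE algebra. -/
class InvBE (X : Type*) where
  imp : X → X → X
  one : X
  zero : X
  be1 : ∀ x : X, imp x x = one
  be2 : ∀ x : X, imp x one = one
  be3 : ∀ x : X, imp one x = x
  be4 : ∀ x y z : X, imp x (imp y z) = imp y (imp x z)
  bound : ∀ x : X, imp zero x = one
  dn : ∀ x : X, imp (imp x zero) zero = x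

namespace InvBE

variable {X : Type*} [InvBE X]

/-- Negation: `x* = x → 0`. -/
def neg (x : X) : X := imp x zero

/-- `x ∨ y = (x → y) → y`. -/
def sup (x y : X) : X := imp (imp x y) y

/-- `x ∧ y = ((x* → y*) → y*)*`. -/
def inf (x y : X) : X := neg (imp (imp (neg x) (neg y)) (neg y))

/-- `x ≤ y` iff `x → y = 1`. -/
def le (x y : X) : Prop := imp x y = one

/-- `x ≤_Q y` iff `x = x ∧ y`. -/
def leQ (x y : X) : Prop := x = inf x y

end InvBE

namespace InvBE

variable {X : Type*} [InvBE X]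

theorem neg_neg (x : X) : neg (neg x) = x := dn x

theorem imp_neg (x y : X) : imp x (neg y) = imp y (neg x) := be4 x y zero

theorem neg_imp_neg (x y : X) : imp (neg x) (neg y) = imp y x := by
  rw [imp_neg, neg_neg]

theorem neg_inf (x y : X) : neg (inf x y) = imp (imp y x) (neg y) := by
  rw [inf, neg_neg, neg_imp_neg]

theorem inf_self (x : X) : inf x x = x := by
  rw [inf, be1, be3, neg_neg]

theorem neg_one : neg (one : X) = zero := be3 zero

theorem one_inf (x : X) : inf one x = x := by
  rw [inf, neg_one, bound, be3, neg_neg]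

theorem inf_one (x : X) : inf x one = x := by
  rw [inf, neg_one]
  change neg (neg (neg (neg x))) = x
  rw [neg_neg, neg_neg]

theorem inf_inf_right (x z : X) : inf x (inf z x) = inf z x := by
  have h : imp (inf z x) x = one := by
    rw [← neg_imp_neg, neg_inf, be4, be1, be2]
  rw [inf, neg_imp_neg, h, be3, neg_neg]

/-- The instance `y = x` of (QW). -/
theorem imp_inf_right
    (h : ∀ x y z : X, imp x (inf (inf x y) (inf z x)) = inf (imp x y) (imp x z)) (x z : X) :
    imp x (inf z x) = imp x z := by
  have := h x x z
  rwa [inf_self, inf_inf_right, be1, one_inf] at this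

/-- The law (QW1) lets `y` be replaced by `x ∧ y` when meeting with `z ∧ x`: the meet `y ∧ w`
depends on `y` only through `w → y`, and `(z ∧ x) → y = (x → z) → (x → y)` by
contraposition and exchange. -/
theorem inf_inf_inf (h : ∀ x y : X, imp x (inf x y) = imp x y) (x y z : X) :
    inf (inf x y) (inf z x) = inf y (inf z x) := by
  have key (t : X) : imp (inf z x) t = imp (imp x z) (imp x t) := by
    rw [← neg_imp_neg, neg_inf, be4, neg_imp_neg]
  have e : imp (inf z x) (inf x y) = imp (inf z x) y := by
    rw [key, key, h]
  rw [← neg_neg (inf (inf x y) _), neg_inf, e, ← neg_inf, neg_neg]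

end InvBE

open InvBE in
theorem stmt_4 {X : Type*} [InvBE X] :
    (∀ x y z : X, imp x (inf (inf x y) (inf z x)) = inf (imp x y) (imp x z)) ↔
    ((∀ x y : X, imp x (inf x y) = imp x y) ∧
     (∀ x y z : X, imp x (inf y (inf z x)) = inf (imp x y) (imp x z))) := by
  constructor
  · intro h
    have qw1 : ∀ x y : X, imp x (inf x y) = imp x y := fun x y => by
      have := h x y one
      rwa [one_inf, be2, inf_one, imp_inf_right h] at this
    exact ⟨qw1, fun x y z => by rw [← inf_inf_inf qw1, h]⟩
  · rintro ⟨qw1, qw2⟩ x y z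
    rw [qw2, qw1]
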